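/- There exist ε > 0, δ ∈ (θ/2, 1/2 − θ), a subset S' ⊆ S of density 1 in S, and constants C > 0, λ₀ > 0, such that for every n_k ∈ S' with n_k ≥ λ₀, every λ ∈ (n_k, n_{k+1}), every ζ ∈ ℤ²∖{0} with |ζ| ≤ λ^ε, and every ξ ∈ A(n_k, n_k^δ), one has |4π²|ξ+ζ|² − λ| ≥ C^{−1} · n_k^δ, i.e. |c_λ(ξ+ζ)| ≤ C · n_k^{−δ}. -/

import Mathlib

open Real MeasureTheory Filter Finset

noncomputable section

/-- `m` is a sum of two integer squares. -/
def IsSum2Sq (m : ℕ) : Prop := ∃ a b : ℤ, (m : ℤ) = a ^ 2 + b ^ 2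

/-- The increasing enumeration `n₀ < n₁ < ⋯` of `S = {4π²m : m a sum of two squares}`. -/
noncomputable def nseq (k : ℕ) : ℝ := 4 * Real.pi ^ 2 * (Nat.nth IsSum2Sq k)

/-- The set `S` of Laplace eigenvalues of the standard torus. -/
def Sset : Set ℝ := Set.range nseq

/-- The number of elements of `S'` (a subset of `S`) that are `≤ X`. -/
noncomputable def countLE (S' : Set ℝ) (X : ℝ) : ℕ :=
  Nat.card {k : ℕ // nseq k ∈ S' ∧ nseq k ≤ X}

/-- `S' ⊆ S` has density one in `S`. -/
def HasDensityOne (S' : Set ℝ) : Prop :=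
  Tendsto (fun X : ℝ => (countLE S' X : ℝ) / (countLE Sset X)) atTop (nhds 1)

/-- The Euclidean norm of a lattice vector. -/
noncomputable def znorm (ξ : Fin 2 → ℤ) : ℝ := Real.sqrt (∑ i, (ξ i : ℝ) ^ 2)

/-- Huxley's exponent in the circle law. -/
noncomputable def θH : ℝ := 133 / 416

lemma aux_exp (v : ℕ) : ((v:ℝ)+1) ≤ 40 * ((2:ℝ)^v)^((1:ℝ)/20) := by
  have h1 : ((2:ℝ)^v)^((1:ℝ)/20) = Real.exp (v * Real.log 2 / 20) := by
    rw [Real.rpow_def_of_pos (by positivity), Real.log_pow]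
    congr 1; ring
  rw [h1]
  have h2 := Real.add_one_le_exp ((v:ℝ) * Real.log 2 / 20)
  have h3 := Real.log_two_gt_d9
  have h4 : (0:ℝ) ≤ v := Nat.cast_nonneg v
  nlinarith

lemma aux_prime (P : ℕ) (hP : (2:ℝ)^(20:ℝ) ≤ P) (p v : ℕ) (hp : p.Prime) :
    ((v:ℝ)+1) ≤ (if p < P then 40 else 1) * (((p:ℝ)^v)^((1:ℝ)/20)) := by
  split_ifs with h
  · refine (aux_exp v).trans ?_
    have : (2:ℝ) ≤ p := by exact_mod_cast hp.two_le
    gcongr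
  · push Not at h
    have h1 : (2:ℝ)^(20:ℝ) ≤ p := hP.trans (by exact_mod_cast h)
    have h2 : ((2:ℝ)^v) ≤ ((p:ℝ)^v)^((1:ℝ)/20) := by
      calc ((2:ℝ)^v) = (((2:ℝ)^(20:ℝ))^v)^((1:ℝ)/20) := by
            rw [← Real.rpow_natCast, ← Real.rpow_natCast, ← Real.rpow_mul (by norm_num), ← Real.rpow_mul (by norm_num)]
            congr 1; ring
        _ ≤ _ := by gcongr
    have h3 : v + 1 ≤ 2^v := Nat.lt_two_pow_self
    have h4 : (v:ℝ)+1 ≤ 2^v := by exact_mod_cast h3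
    linarith

lemma divisor_bound : ∃ C : ℝ, 1 ≤ C ∧ ∀ n : ℕ, n ≠ 0 →
    (#n.divisors : ℝ) ≤ C * (n:ℝ)^((1:ℝ)/20) := by
  obtain ⟨P, hP⟩ := exists_nat_ge ((2:ℝ)^(20:ℝ))
  refine ⟨40^P, one_le_pow₀ (by norm_num), fun n hn => ?_⟩
  rw [Nat.card_divisors hn]
  push_cast
  have h1 : (n:ℝ) = ∏ p ∈ n.primeFactors, (p:ℝ)^(n.factorization p) := by
    conv_lhs => rw [← Nat.prod_factorization_pow_eq_self hn]
    rw [Finsupp.prod, Nat.support_factorization]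
    push_cast; rfl
  calc (∏ x ∈ n.primeFactors, ((n.factorization x : ℝ)+1))
      ≤ ∏ p ∈ n.primeFactors, ((if p < P then (40:ℝ) else 1) * (((p:ℝ)^(n.factorization p))^((1:ℝ)/20))) := by
        apply Finset.prod_le_prod
        · intros; positivity
        · intro p hp
          exact aux_prime P hP p _ (Nat.prime_of_mem_primeFactors hp)
    _ = (∏ p ∈ n.primeFactors, (if p < P then (40:ℝ) else 1)) * (n:ℝ)^((1:ℝ)/20) := by
        rw [Finset.prod_mul_distrib, Real.finsetProd_rpow _ _ (by intros; positivity), ← h1]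
    _ ≤ _ := by
        gcongr
        rw [Finset.prod_ite]
        simp only [Finset.prod_const, mul_one, one_pow]
        apply pow_le_pow_right₀ (by norm_num)
        calc #{x ∈ n.primeFactors | x < P} ≤ #(Finset.range P) := Finset.card_le_card (by
              intro x hx; simp at hx ⊢; exact hx.2)
          _ = P := by simp

/-- For `b₁ ≠ b₂`, the number of pairs of squares with given difference is at most a divisor count. -/
lemma fiber_bound (s : Finset ℕ) (hs : ∀ a ∈ s, ∃ x : ℕ, a = x^2) (b1 b2 : ℕ) (hb : b1 ≠ b2) :
    #{a ∈ s ×ˢ s | a.1 + b1 = a.2 + b2} ≤ #(((b1:ℤ) - b2).natAbs).divisors := by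
  apply Finset.card_le_card_of_injOn
    (fun a => (((Nat.sqrt a.1 : ℤ) - Nat.sqrt a.2)).natAbs)
  · rintro ⟨a1, a2⟩ ha
    simp only [coe_filter, mem_product, Set.mem_ofPred_eq] at ha
    obtain ⟨⟨h1, h2⟩, h⟩ := ha
    obtain ⟨x, rfl⟩ := hs _ h1
    obtain ⟨y, rfl⟩ := hs _ h2
    simp only [Nat.sqrt_eq', mem_coe, Nat.mem_divisors]
    constructor
    · rw [Int.natAbs_dvd_natAbs]
      refine ⟨-((x:ℤ)+y), ?_⟩
      have : (x:ℤ)^2 + b1 = y^2 + b2 := by exact_mod_cast h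
      linear_combination this
    · omega
  · rintro ⟨a1, a2⟩ ha ⟨a3, a4⟩ ha' heq
    simp only [coe_filter, mem_product, Set.mem_ofPred_eq] at ha ha'
    obtain ⟨⟨h1, h2⟩, h⟩ := ha
    obtain ⟨x, rfl⟩ := hs _ h1
    obtain ⟨y, rfl⟩ := hs _ h2
    obtain ⟨⟨h1', h2'⟩, h'⟩ := ha'
    obtain ⟨z, rfl⟩ := hs _ h1'
    obtain ⟨w, rfl⟩ := hs _ h2'
    simp only [Nat.sqrt_eq'] at heq
    have e1 : (x:ℤ)^2 + b1 = y^2 + b2 := by exact_mod_cast h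
    have e2 : (z:ℤ)^2 + b1 = w^2 + b2 := by exact_mod_cast h'
    have hx : (0:ℤ) ≤ x := by positivity
    have hy : (0:ℤ) ≤ y := by positivity
    have hz : (0:ℤ) ≤ z := by positivity
    have hw : (0:ℤ) ≤ w := by positivity
    have hb' : (b2:ℤ) - b1 ≠ 0 := by omega
    have f1 : ((x:ℤ) - y) * (x + y) = b2 - b1 := by linear_combination e1
    have f2 : ((z:ℤ) - w) * (z + w) = b2 - b1 := by linear_combination e2
    have hne : (x:ℤ) - y ≠ 0 := by
      intro h0; rw [h0] at f1; apply hb'; linarith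
    have key : (x:ℤ) = z ∧ (y:ℤ) = w := by
      rcases Int.natAbs_eq_natAbs_iff.mp heq with h3 | h3
      · have : (x:ℤ) + y = z + w := by
          apply mul_left_cancel₀ hne
          rw [f1, ← f2, h3]
        constructor <;> linarith
      · have : (x:ℤ) + y = -(z + w) := by
          apply mul_left_cancel₀ hne
          rw [f1, ← f2, h3]; ring
        exfalso; apply hne; linarith
    have k1 : x = z := by exact_mod_cast key.1
    have k2 : y = w := by exact_mod_cast key.2
    rw [k1, k2]

open Pointwise in
open scoped Classical in
lemma count_lower : ∃ c : ℝ, 0 < c ∧ ∀ N : ℕ, 1 ≤ N →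
    c * (N:ℝ)^((19:ℝ)/10) ≤ #{m ∈ Finset.range (2*N^2+1) | IsSum2Sq m} := by
  obtain ⟨C, hC, hd⟩ := divisor_bound
  refine ⟨(1 + C)⁻¹, by positivity, fun N hN => ?_⟩
  set s : Finset ℕ := (Finset.Icc 1 N).image (fun a => a^2) with hs
  have hcard : #s = N := by
    rw [hs, Finset.card_image_of_injective _ (Nat.pow_left_injective (by norm_num))]; simp
  have hsq : ∀ a ∈ s, ∃ x : ℕ, a = x^2 := by
    intro a ha; rw [hs, Finset.mem_image] at ha
    obtain ⟨x, -, rfl⟩ := ha; exact ⟨x, rfl⟩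
  have hle : ∀ a ∈ s, 1 ≤ a ∧ a ≤ N^2 := by
    intro a ha; rw [hs, Finset.mem_image] at ha
    obtain ⟨x, hx, rfl⟩ := ha
    simp at hx
    exact ⟨Nat.one_le_pow _ _ hx.1, Nat.pow_le_pow_left hx.2 _⟩
  have hN1 : (1:ℝ) ≤ N := by exact_mod_cast hN
  have hsub : #(s + s) ≤ #{m ∈ Finset.range (2*N^2+1) | IsSum2Sq m} := by
    apply Finset.card_le_card
    intro m hm
    obtain ⟨a, ha, b, hb, rfl⟩ := Finset.mem_add.mp hm
    have := hle a ha
    have := hle b hb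
    obtain ⟨x, rfl⟩ := hsq a ha
    obtain ⟨y, rfl⟩ := hsq b hb
    simp only [Finset.mem_filter, Finset.mem_range]
    exact ⟨by omega, x, y, by push_cast; ring⟩
  have hen : (s.addEnergy s : ℝ) ≤ (1 + C) * (N:ℝ)^((21:ℝ)/10) := by
    have e1 : s.addEnergy s = ∑ b ∈ s ×ˢ s, #{a ∈ s ×ˢ s | a.1 + b.1 = a.2 + b.2} := by
      unfold Finset.addEnergy
      rw [Finset.card_filter, Finset.sum_product_right]
      apply Finset.sum_congr rfl
      intro b hb
      rw [Finset.card_filter]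
    have e2 : s.addEnergy s = (∑ b ∈ s ×ˢ s with b.1 = b.2, #{a ∈ s ×ˢ s | a.1 + b.1 = a.2 + b.2})
      + ∑ b ∈ s ×ˢ s with ¬ (b.1 = b.2), #{a ∈ s ×ˢ s | a.1 + b.1 = a.2 + b.2} := by
      rw [e1, Finset.sum_filter_add_sum_filter_not]
    have hdiag : #{a ∈ s ×ˢ s | a.1 = a.2} ≤ N := by
      rw [← hcard]
      apply Finset.card_le_card_of_injOn Prod.fst
      · rintro ⟨a, b⟩ h; simp at h; exact h.1.1
      · rintro ⟨a, b⟩ h ⟨c, d⟩ h' e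
        simp at h h' e
        have := h.2; have := h'.2
        subst_vars; rfl
    have e3 : (∑ b ∈ s ×ˢ s with b.1 = b.2, #{a ∈ s ×ˢ s | a.1 + b.1 = a.2 + b.2}) ≤ N * N := by
      calc _ ≤ ∑ b ∈ s ×ˢ s with b.1 = b.2, N := by
            apply Finset.sum_le_sum
            rintro ⟨b1, b2⟩ hb
            have h2 := (Finset.mem_filter.mp hb).2
            simp only at h2
            subst h2
            simpa using hdiag
        _ ≤ _ := by
            rw [Finset.sum_const, smul_eq_mul]
            exact Nat.mul_le_mul_right _ hdiag
    have e4 : ((∑ b ∈ s ×ˢ s with ¬ (b.1 = b.2), #{a ∈ s ×ˢ s | a.1 + b.1 = a.2 + b.2} : ℕ) : ℝ)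
        ≤ (N:ℝ)^2 * (C * (N:ℝ)^((1:ℝ)/10)) := by
      push_cast
      calc _ ≤ ∑ b ∈ s ×ˢ s with ¬ (b.1 = b.2), C * (N:ℝ)^((1:ℝ)/10) := by
            apply Finset.sum_le_sum
            rintro ⟨b1, b2⟩ hb
            have h2 := (Finset.mem_filter.mp hb).2
            have h1 := Finset.mem_product.mp (Finset.mem_filter.mp hb).1
            simp only at h2 h1
            have hb1 := hle _ h1.1
            have hb2 := hle _ h1.2
            have h3 := fiber_bound s hsq b1 b2 h2
            have h4 := hd (((b1:ℤ) - b2).natAbs) (by omega)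
            have h5 : (((b1:ℤ) - b2).natAbs : ℝ) ≤ (N:ℝ)^2 := by
              have : ((b1:ℤ) - b2).natAbs ≤ N^2 := by omega
              exact_mod_cast this
            calc _ ≤ (#(((b1:ℤ) - b2).natAbs).divisors : ℝ) := by exact_mod_cast h3
              _ ≤ _ := h4
              _ ≤ C * ((N:ℝ)^2)^((1:ℝ)/20) := by gcongr
              _ = _ := by
                rw [← Real.rpow_natCast, ← Real.rpow_mul (by positivity)]
                norm_num
        _ ≤ _ := by
            rw [Finset.sum_const, nsmul_eq_mul]
            gcongr
            have : #{b ∈ s ×ˢ s | ¬ (b.1 = b.2)} ≤ N^2 := by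
              refine (Finset.card_filter_le _ _).trans ?_
              rw [Finset.card_product, hcard]; exact le_of_eq (by ring)
            exact_mod_cast this
    have e5 : (N:ℝ)^((21:ℝ)/10) = (N:ℝ)^2 * (N:ℝ)^((1:ℝ)/10) := by
      rw [← Real.rpow_natCast, ← Real.rpow_add (by positivity)]; norm_num
    have e6 : (1:ℝ) ≤ (N:ℝ)^((1:ℝ)/10) := Real.one_le_rpow hN1 (by norm_num)
    have e7 : ((∑ b ∈ s ×ˢ s with b.1 = b.2, #{a ∈ s ×ˢ s | a.1 + b.1 = a.2 + b.2} : ℕ) : ℝ) ≤ (N:ℝ)*N := by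
      exact_mod_cast e3
    rw [e2, Nat.cast_add, e5]
    have : (N:ℝ)*N ≤ (N:ℝ)^2 * (N:ℝ)^((1:ℝ)/10) := by nlinarith [sq_nonneg (N:ℝ)]
    linarith
  have hmain : (N:ℝ)^4 ≤ (#(s+s) : ℝ) * (s.addEnergy s : ℝ) := by
    have := Finset.le_card_add_mul_addEnergy s s
    rw [hcard] at this
    have h : N^4 ≤ #(s+s) * s.addEnergy s := by
      calc N^4 = N^2*N^2 := by ring
        _ ≤ _ := this
    exact_mod_cast h
  have hfin : (N:ℝ)^4 ≤ (#{m ∈ Finset.range (2*N^2+1) | IsSum2Sq m} : ℝ) * ((1 + C) * (N:ℝ)^((21:ℝ)/10)) := by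
    refine hmain.trans ?_
    have : (#(s+s) : ℝ) ≤ #{m ∈ Finset.range (2*N^2+1) | IsSum2Sq m} := by exact_mod_cast hsub
    gcongr
  have e8 : (N:ℝ)^4 = (N:ℝ)^((19:ℝ)/10) * (N:ℝ)^((21:ℝ)/10) := by
    rw [← Real.rpow_natCast, ← Real.rpow_add (by positivity)]; norm_num
  rw [e8, ← mul_assoc] at hfin
  have h9 := le_of_mul_le_mul_right hfin (by positivity)
  rw [inv_mul_le_iff₀ (by positivity)]
  linarith

open scoped Classical in
lemma count_lower' : ∃ c : ℝ, 0 < c ∧ ∀ Y : ℕ, 2 ≤ Y →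
    c * (Y:ℝ)^((19:ℝ)/20) ≤ #{m ∈ Finset.range (Y+1) | IsSum2Sq m} := by
  obtain ⟨c, hc, h⟩ := count_lower
  refine ⟨c * ((1:ℝ)/8)^((19:ℝ)/20), by positivity, fun Y hY => ?_⟩
  set N := Nat.sqrt (Y/2) with hN
  have h1 : 1 ≤ N := by rw [hN, Nat.le_sqrt]; omega
  have h2 : N * N ≤ Y/2 := Nat.sqrt_le _
  have h3 : Y/2 < (N+1)*(N+1) := Nat.lt_succ_sqrt _
  have h4 : Y ≤ 8 * N^2 := by
    have : (N+1)*(N+1) ≤ 4 * (N*N) := by nlinarith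
    have : N^2 = N*N := sq N
    omega
  have h5 : (1:ℝ)/8 * Y ≤ (N:ℝ)^2 := by
    have : (Y:ℝ) ≤ 8 * (N:ℝ)^2 := by exact_mod_cast h4
    linarith
  calc _ = c * ((1:ℝ)/8 * Y)^((19:ℝ)/20) := by
        rw [Real.mul_rpow (by norm_num) (by positivity)]; ring
    _ ≤ c * ((N:ℝ)^2)^((19:ℝ)/20) := by gcongr
    _ = c * (N:ℝ)^((19:ℝ)/10) := by
        rw [← Real.rpow_natCast, ← Real.rpow_mul (by positivity)]; norm_num
    _ ≤ _ := h N h1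
    _ ≤ _ := by
        have : 2*N^2+1 ≤ Y+1 := by have : N^2 = N*N := sq N
                                   omega
        exact_mod_cast Finset.card_le_card (Finset.filter_subset_filter _ (Finset.range_subset_range.mpr this))

/-- Large gap after `m`. -/
def Bad1 (m : ℕ) : Prop :=
  ∀ m' : ℕ, m < m' → (m':ℝ) ≤ m + (m:ℝ)^((17:ℝ)/100) → ¬ IsSum2Sq m'

/-- There is a lattice point near the circle `|ξ|² = m` almost orthogonal to a short vector. -/
def Bad2 (m : ℕ) : Prop :=
  ∃ x y z w : ℤ, (z ≠ 0 ∨ w ≠ 0) ∧ |(z:ℝ)| ≤ 2 * (m:ℝ)^((1:ℝ)/100) ∧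
    |(w:ℝ)| ≤ 2 * (m:ℝ)^((1:ℝ)/100) ∧
    |((x:ℝ)^2 + (y:ℝ)^2) - m| ≤ (m:ℝ)^((17:ℝ)/100) ∧
    |(x:ℝ) * z + (y:ℝ) * w| ≤ 2 * (m:ℝ)^((17:ℝ)/100)

lemma mem_Icc_floor (z : ℤ) (r : ℝ) (h : |(z:ℝ)| ≤ r) : z ∈ Finset.Icc (-(⌊r⌋₊:ℤ)) (⌊r⌋₊:ℤ) := by
  have h0 : (0:ℝ) ≤ r := (abs_nonneg _).trans h
  have h1 : z.natAbs ≤ ⌊r⌋₊ := by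
    apply Nat.le_floor
    rw [Nat.cast_natAbs]; simpa using h
  rw [Finset.mem_Icc]; omega

lemma card_Icc_floor (r : ℝ) (h : 1 ≤ r) : (#(Finset.Icc (-(⌊r⌋₊:ℤ)) (⌊r⌋₊:ℤ)) : ℝ) ≤ 3 * r := by
  rw [Int.card_Icc]
  have h1 : ((⌊r⌋₊:ℤ) + 1 - -(⌊r⌋₊:ℤ)).toNat = 2 * ⌊r⌋₊ + 1 := by omega
  rw [h1]; push_cast
  have := Nat.floor_le (zero_le_one.trans h)
  linarith

lemma bad2_symm (m : ℕ) (h : Bad2 m) :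
  ∃ x y z w : ℤ, z ≠ 0 ∧ |(z:ℝ)| ≤ 2 * (m:ℝ)^((1:ℝ)/100) ∧
    |(w:ℝ)| ≤ 2 * (m:ℝ)^((1:ℝ)/100) ∧
    |((x:ℝ)^2 + (y:ℝ)^2) - m| ≤ (m:ℝ)^((17:ℝ)/100) ∧
    |(x:ℝ) * z + (y:ℝ) * w| ≤ 2 * (m:ℝ)^((17:ℝ)/100) := by
  obtain ⟨x, y, z, w, h0, h1, h2, h3, h4⟩ := h
  rcases h0 with h0 | h0
  · exact ⟨x, y, z, w, h0, h1, h2, h3, h4⟩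
  · exact ⟨y, x, w, z, h0, h2, h1, by rwa [add_comm ((y:ℝ)^2)], by rwa [add_comm ((y:ℝ)*w)]⟩

open scoped Classical in
lemma bad2_count (Y : ℕ) (hY : 1 ≤ Y) :
    (#{m ∈ Finset.range (Y+1) | Bad2 m} : ℝ) ≤ 3888 * (Y:ℝ)^((86:ℝ)/100) := by
  have hY1 : (1:ℝ) ≤ Y := by exact_mod_cast hY
  set Z : ℝ := 2 * (Y:ℝ)^((1:ℝ)/100) with hZ
  set D : ℝ := (Y:ℝ)^((17:ℝ)/100) with hD
  set R : ℝ := 2 * (Y:ℝ)^((1:ℝ)/2) with hR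
  have hD1 : 1 ≤ D := Real.one_le_rpow hY1 (by norm_num)
  have hZ1 : 1 ≤ Z := by have := Real.one_le_rpow hY1 (show (0:ℝ) ≤ 1/100 by norm_num); linarith
  have hR1 : 1 ≤ R := by have := Real.one_le_rpow hY1 (show (0:ℝ) ≤ 1/2 by norm_num); linarith
  have hDY : D ≤ Y := by
    calc D ≤ (Y:ℝ)^(1:ℝ) := Real.rpow_le_rpow_of_exponent_le hY1 (by norm_num)
      _ = Y := Real.rpow_one _
  let I : ℝ → Finset ℤ := fun r => Finset.Icc (-(⌊r⌋₊:ℤ)) (⌊r⌋₊:ℤ)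
  let F : ℤ × ℤ × ℤ × ℤ × ℤ → ℕ := fun p =>
    (((p.2.2.1 - p.2.1 * p.2.2.2.1) / p.1)^2 + p.2.2.2.1^2 + p.2.2.2.2).toNat
  have hsub : ({m ∈ Finset.range (Y+1) | Bad2 m} : Finset ℕ) ⊆
      (I Z ×ˢ I Z ×ˢ I (2*D) ×ˢ I R ×ˢ I D).image F := by
    intro m hm
    obtain ⟨hm1, hm2⟩ := Finset.mem_filter.mp hm
    have hmY : (m:ℝ) ≤ Y := by
      have := Finset.mem_range.mp hm1
      exact_mod_cast Nat.lt_succ_iff.mp this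
    obtain ⟨x, y, z, w, h0, h1, h2, h3, h4⟩ := bad2_symm m hm2
    have hmD : (m:ℝ)^((17:ℝ)/100) ≤ D := by rw [hD]; gcongr
    have hmZ : 2 * (m:ℝ)^((1:ℝ)/100) ≤ Z := by rw [hZ]; gcongr
    rw [Finset.mem_image]
    refine ⟨(z, w, x*z+y*w, y, (m:ℤ) - (x^2+y^2)), ?_, ?_⟩
    · simp only [Finset.mem_product]
      refine ⟨mem_Icc_floor _ _ (h1.trans hmZ), mem_Icc_floor _ _ (h2.trans hmZ),
        mem_Icc_floor _ _ ?_, mem_Icc_floor _ _ ?_, mem_Icc_floor _ _ ?_⟩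
      · push_cast; linarith
      · apply abs_le_of_sq_le_sq _ (by linarith)
        have : R^2 = 4 * Y := by
          rw [hR, mul_pow, ← Real.sqrt_eq_rpow, Real.sq_sqrt (by positivity)]; norm_num
        rw [this]
        have := (abs_le.mp h3).2
        nlinarith [sq_nonneg (x:ℝ)]
      · push_cast
        rw [abs_sub_comm]; linarith
    · simp only [F]
      have : (x*z+y*w - w*y)/z = x := by
        rw [show x*z+y*w-w*y = x*z by ring]
        exact Int.mul_ediv_cancel _ h0
      rw [this]
      have : x^2+y^2+((m:ℤ)-(x^2+y^2)) = m := by ring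
      rw [this]; simp
  have hc := (Finset.card_le_card hsub).trans Finset.card_image_le
  simp only [Finset.card_product] at hc
  have hc' : (#{m ∈ Finset.range (Y+1) | Bad2 m} : ℝ) ≤ (#(I Z):ℝ) * (#(I Z) * (#(I (2*D)) * (#(I R) * #(I D)))) := by
    exact_mod_cast hc
  refine hc'.trans ?_
  have k1 : (#(I Z):ℝ) ≤ 3*Z := card_Icc_floor _ hZ1
  have k2 : (#(I (2*D)):ℝ) ≤ 3*(2*D) := card_Icc_floor _ (by linarith)
  have k3 : (#(I R):ℝ) ≤ 3*R := card_Icc_floor _ hR1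
  have k4 : (#(I D):ℝ) ≤ 3*D := card_Icc_floor _ hD1
  calc _ ≤ (3*Z)*((3*Z)*((3*(2*D))*((3*R)*(3*D)))) := by gcongr
    _ = 3888 * ((Y:ℝ)^((1:ℝ)/100) * (Y:ℝ)^((1:ℝ)/100) * (Y:ℝ)^((17:ℝ)/100) * (Y:ℝ)^((1:ℝ)/2) * (Y:ℝ)^((17:ℝ)/100)) := by
      rw [hZ, hD, hR]; ring
    _ = _ := by
      rw [← Real.rpow_add (by positivity), ← Real.rpow_add (by positivity), ← Real.rpow_add (by positivity), ← Real.rpow_add (by positivity)]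
      norm_num

open scoped Classical in
lemma bad1_count (Y : ℕ) (hY : 1 ≤ Y) :
    (#{m ∈ Finset.range (Y+1) | IsSum2Sq m ∧ Bad1 m} : ℝ) ≤ 4 * (Y:ℝ)^((87:ℝ)/100) := by
  have hY1 : (1:ℝ) ≤ Y := by exact_mod_cast hY
  set A : ℝ := (Y:ℝ)^((87:ℝ)/100) with hA
  set g : ℝ := A^((17:ℝ)/100) with hg
  have hA1 : 1 ≤ A := Real.one_le_rpow hY1 (by norm_num)
  have hg1 : 1 ≤ g := Real.one_le_rpow hA1 (by norm_num)
  have hYg : (Y:ℝ)/g ≤ A := by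
    rw [div_le_iff₀ (by positivity)]
    calc (Y:ℝ) = (Y:ℝ)^(1:ℝ) := (Real.rpow_one _).symm
      _ ≤ (Y:ℝ)^((87:ℝ)/100 + (87:ℝ)/100*((17:ℝ)/100)) :=
        Real.rpow_le_rpow_of_exponent_le hY1 (by norm_num)
      _ = A * g := by rw [hg, hA, ← Real.rpow_mul (by positivity), Real.rpow_add (by positivity)]
  set B : Finset ℕ := {m ∈ Finset.range (Y+1) | IsSum2Sq m ∧ Bad1 m} with hB
  have hsplit := Finset.card_filter_add_card_filter_not (s := B) (fun m : ℕ => (m:ℝ) ≤ A)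
  have c1 : #{m ∈ B | ((m:ℕ):ℝ) ≤ A} ≤ ⌊A⌋₊ + 1 := by
    rw [← Finset.card_range (⌊A⌋₊+1)]
    apply Finset.card_le_card
    intro m hm
    rw [Finset.mem_range, Nat.lt_succ_iff]
    exact Nat.le_floor (Finset.mem_filter.mp hm).2
  have c2 : #{m ∈ B | ¬ ((m:ℕ):ℝ) ≤ A} ≤ ⌊A⌋₊ + 1 := by
    rw [← Finset.card_range (⌊A⌋₊+1)]
    have key : ∀ m ∈ B, ∀ m' ∈ B, ¬ (m:ℝ) ≤ A → m < m' → ⌊(m:ℝ)/g⌋₊ < ⌊(m':ℝ)/g⌋₊ := by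
      intro m hm m' hm' hmA hlt
      have hb := (Finset.mem_filter.mp hm).2.2 m' hlt
      have hp := (Finset.mem_filter.mp hm').2.1
      have h1 : (m:ℝ) + (m:ℝ)^((17:ℝ)/100) < m' := by
        by_contra hcon
        exact hb (not_lt.mp hcon) hp
      have h2 : g ≤ (m:ℝ)^((17:ℝ)/100) := by
        rw [hg]; push Not at hmA; gcongr
      have h3 : (m:ℝ)/g + 1 ≤ (m':ℝ)/g := by
        rw [div_add_one (by positivity)]
        gcongr; linarith
      rw [← Nat.succ_le_iff, Nat.succ_eq_add_one, ← Nat.floor_add_one (by positivity)]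
      exact Nat.floor_le_floor h3
    apply Finset.card_le_card_of_injOn (fun m : ℕ => ⌊(m:ℝ)/g⌋₊)
    · intro m hm
      have hm' := Finset.mem_filter.mp (Finset.mem_coe.mp hm)
      have hmY : m ≤ Y := Nat.lt_succ_iff.mp (Finset.mem_range.mp (Finset.mem_filter.mp hm'.1).1)
      have hmY' : (m:ℝ) ≤ Y := by exact_mod_cast hmY
      rw [Finset.mem_coe, Finset.mem_range, Nat.lt_succ_iff]
      apply Nat.floor_le_floor
      refine le_trans ?_ hYg
      gcongr
    · intro m hm m' hm' he
      have h1 := Finset.mem_filter.mp (Finset.mem_coe.mp hm)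
      have h2 := Finset.mem_filter.mp (Finset.mem_coe.mp hm')
      simp only at he
      rcases lt_trichotomy m m' with h | h | h
      · have := key m h1.1 m' h2.1 h1.2 h; omega
      · exact h
      · have := key m' h2.1 m h1.1 h2.2 h; omega
  have hfl : (⌊A⌋₊:ℝ) ≤ A := Nat.floor_le (by positivity)
  have : #B ≤ 2 * (⌊A⌋₊ + 1) := by omega
  have h' : (#B:ℝ) ≤ 2 * ((⌊A⌋₊:ℝ) + 1) := by exact_mod_cast this
  linarith

open scoped Classical in
lemma bad_count (Y : ℕ) (hY : 1 ≤ Y) :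
    (#{m ∈ Finset.range (Y+1) | IsSum2Sq m ∧ (Bad1 m ∨ Bad2 m)} : ℝ) ≤ 4000 * (Y:ℝ)^((87:ℝ)/100) := by
  have hY1 : (1:ℝ) ≤ Y := by exact_mod_cast hY
  have h1 := bad1_count Y hY
  have h2 := bad2_count Y hY
  have h3 : (Y:ℝ)^((86:ℝ)/100) ≤ (Y:ℝ)^((87:ℝ)/100) :=
    Real.rpow_le_rpow_of_exponent_le hY1 (by norm_num)
  have h4 : #{m ∈ Finset.range (Y+1) | IsSum2Sq m ∧ (Bad1 m ∨ Bad2 m)} ≤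
      #{m ∈ Finset.range (Y+1) | IsSum2Sq m ∧ Bad1 m} + #{m ∈ Finset.range (Y+1) | Bad2 m} := by
    refine le_trans (Finset.card_le_card ?_) (Finset.card_union_le _ _)
    intro m hm
    simp only [Finset.mem_filter, Finset.mem_union] at hm ⊢
    tauto
  have h5 : (#{m ∈ Finset.range (Y+1) | IsSum2Sq m ∧ (Bad1 m ∨ Bad2 m)} : ℝ) ≤
      #{m ∈ Finset.range (Y+1) | IsSum2Sq m ∧ Bad1 m} + #{m ∈ Finset.range (Y+1) | Bad2 m} := by
    exact_mod_cast h4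
  have : 0 ≤ (Y:ℝ)^((87:ℝ)/100) := by positivity
  linarith

lemma inf_sum2sq : (Set.ofPred IsSum2Sq).Infinite := by
  apply Set.infinite_of_injective_forall_mem (f := fun n : ℕ => n^2)
  · exact Nat.pow_left_injective (by norm_num)
  · intro n; exact ⟨n, 0, by push_cast; ring⟩

lemma kappa_pos : (0:ℝ) < 4 * Real.pi^2 := by positivity

lemma nseq_strictMono : StrictMono nseq := by
  intro a b h
  unfold nseq
  have := Nat.nth_strictMono inf_sum2sq h
  have h' : ((Nat.nth IsSum2Sq a : ℕ):ℝ) < (Nat.nth IsSum2Sq b : ℕ) := by exact_mod_cast this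
  exact mul_lt_mul_of_pos_left h' kappa_pos

open scoped Classical in
lemma card_eq (Q : ℕ → Prop) (X : ℝ) (hX : 0 ≤ X) :
    Nat.card {k : ℕ // Q (Nat.nth IsSum2Sq k) ∧ nseq k ≤ X} =
      #{m ∈ Finset.range (⌊X / (4 * Real.pi^2)⌋₊ + 1) | IsSum2Sq m ∧ Q m} := by
  rw [← Nat.card_eq_finsetCard]
  have hiff : ∀ k, nseq k ≤ X ↔ Nat.nth IsSum2Sq k < ⌊X / (4 * Real.pi^2)⌋₊ + 1 := by
    intro k
    rw [Nat.lt_succ_iff, Nat.le_floor_iff (by positivity), le_div_iff₀ kappa_pos, mul_comm]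
    rfl
  refine Nat.card_congr (Equiv.ofBijective
    (fun k => ⟨Nat.nth IsSum2Sq k.1, ?_⟩) ⟨?_, ?_⟩)
  · rw [Finset.mem_filter, Finset.mem_range]
    exact ⟨(hiff _).mp k.2.2, Nat.nth_mem_of_infinite inf_sum2sq _, k.2.1⟩
  · intro a b h
    simp only [Subtype.mk.injEq] at h
    exact Subtype.ext (Nat.nth_injective inf_sum2sq h)
  · rintro ⟨m, hm⟩
    rw [Finset.mem_filter, Finset.mem_range] at hm
    have hk : Nat.nth IsSum2Sq (Nat.count IsSum2Sq m) = m := Nat.nth_count hm.2.1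
    refine ⟨⟨Nat.count IsSum2Sq m, ?_, ?_⟩, ?_⟩
    · rw [hk]; exact hm.2.2
    · rw [hiff, hk]; exact hm.1
    · exact Subtype.ext hk

/-- The good set. -/
def Sgood : Set ℝ := {x | ∃ k, nseq k = x ∧ ¬ (Bad1 (Nat.nth IsSum2Sq k) ∨ Bad2 (Nat.nth IsSum2Sq k))}

lemma mem_Sgood (k : ℕ) : nseq k ∈ Sgood ↔ ¬ (Bad1 (Nat.nth IsSum2Sq k) ∨ Bad2 (Nat.nth IsSum2Sq k)) := by
  constructor
  · rintro ⟨j, hj, h⟩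
    rw [← nseq_strictMono.injective hj]; exact h
  · intro h; exact ⟨k, rfl, h⟩

lemma density : HasDensityOne Sgood := by
  classical
  obtain ⟨c, hc, hlow⟩ := count_lower'
  unfold HasDensityOne
  have hYt : Tendsto (fun X : ℝ => ⌊X / (4 * Real.pi^2)⌋₊) atTop atTop :=
    tendsto_nat_floor_atTop.comp (tendsto_id.atTop_div_const kappa_pos)
  have hlim : Tendsto (fun X : ℝ => 1 - 4000 / c * ((⌊X / (4 * Real.pi^2)⌋₊ : ℕ):ℝ)^(-((8:ℝ)/100))) atTop (nhds 1) := by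
    have h1 : Tendsto (fun X : ℝ => ((⌊X / (4 * Real.pi^2)⌋₊ : ℕ):ℝ)^(-((8:ℝ)/100))) atTop (nhds 0) :=
      (tendsto_rpow_neg_atTop (by norm_num)).comp (tendsto_natCast_atTop_atTop.comp hYt)
    have h2 := (h1.const_mul (4000/c)).const_sub 1
    simpa using h2
  have hev : ∀ᶠ X : ℝ in atTop, 0 ≤ X ∧ 2 ≤ ⌊X / (4 * Real.pi^2)⌋₊ :=
    (eventually_ge_atTop 0).and (hYt.eventually_ge_atTop 2)
  have hcnt : ∀ X : ℝ, 0 ≤ X →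
      (countLE Sset X = #{m ∈ Finset.range (⌊X / (4 * Real.pi^2)⌋₊ + 1) | IsSum2Sq m}) ∧
      (countLE Sgood X = #{m ∈ Finset.range (⌊X / (4 * Real.pi^2)⌋₊ + 1) | IsSum2Sq m ∧ ¬ (Bad1 m ∨ Bad2 m)}) := by
    intro X hX
    constructor
    · have := card_eq (fun _ => True) X hX
      simp only [true_and, and_true] at this
      rw [← this]
      unfold countLE
      congr! 3 with k
      simp [Sset]
    · refine Eq.trans ?_ ((card_eq (fun m => ¬ (Bad1 m ∨ Bad2 m)) X hX).trans (by congr))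
      unfold countLE
      simp only [mem_Sgood]
  have hsum : ∀ Y : ℕ, #{m ∈ Finset.range (Y + 1) | IsSum2Sq m} =
      #{m ∈ Finset.range (Y + 1) | IsSum2Sq m ∧ (Bad1 m ∨ Bad2 m)} +
      #{m ∈ Finset.range (Y + 1) | IsSum2Sq m ∧ ¬ (Bad1 m ∨ Bad2 m)} := by
    intro Y
    rw [← Finset.filter_filter, ← Finset.filter_filter, Finset.card_filter_add_card_filter_not]
  refine tendsto_of_tendsto_of_tendsto_of_le_of_le' hlim tendsto_const_nhds ?_ ?_
  · filter_upwards [hev] with X hX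
    obtain ⟨h1, h2⟩ := hcnt X hX.1
    rw [h1, h2]
    set Y := ⌊X / (4 * Real.pi^2)⌋₊ with hY
    have hs := hsum Y
    have hl := hlow Y hX.2
    have hb := bad_count Y (by omega)
    have hs' : (#{m ∈ Finset.range (Y + 1) | IsSum2Sq m} : ℝ) =
      #{m ∈ Finset.range (Y + 1) | IsSum2Sq m ∧ (Bad1 m ∨ Bad2 m)} +
      #{m ∈ Finset.range (Y + 1) | IsSum2Sq m ∧ ¬ (Bad1 m ∨ Bad2 m)} := by exact_mod_cast hs
    set T : ℝ := (#{m ∈ Finset.range (Y + 1) | IsSum2Sq m} : ℝ)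
    set B : ℝ := (#{m ∈ Finset.range (Y + 1) | IsSum2Sq m ∧ (Bad1 m ∨ Bad2 m)} : ℝ)
    set G : ℝ := (#{m ∈ Finset.range (Y + 1) | IsSum2Sq m ∧ ¬ (Bad1 m ∨ Bad2 m)} : ℝ)
    have hY0 : (0:ℝ) < Y := by
      have : 0 < Y := by omega
      exact_mod_cast this
    have hT : 0 < T := lt_of_lt_of_le (by positivity) hl
    rw [le_div_iff₀ hT, sub_mul, one_mul]
    have : B ≤ 4000 / c * (Y:ℝ)^(-((8:ℝ)/100)) * T := by
      calc B ≤ 4000 * (Y:ℝ)^((87:ℝ)/100) := hb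
        _ = 4000 / c * (Y:ℝ)^(-((8:ℝ)/100)) * (c * (Y:ℝ)^((19:ℝ)/20)) := by
          have : (Y:ℝ)^((87:ℝ)/100) = (Y:ℝ)^(-((8:ℝ)/100)) * (Y:ℝ)^((19:ℝ)/20) := by
            rw [← Real.rpow_add hY0]; norm_num
          rw [this]; field_simp
        _ ≤ _ := by gcongr
    linarith
  · filter_upwards [hev] with X hX
    obtain ⟨h1, h2⟩ := hcnt X hX.1
    rw [h1, h2]
    apply div_le_one_of_le₀ _ (by positivity)
    rw [hsum]
    push_cast
    linarith [Nat.cast_nonneg (α := ℝ) (#{m ∈ Finset.range (⌊X / (4 * Real.pi^2)⌋₊ + 1) | IsSum2Sq m ∧ (Bad1 m ∨ Bad2 m)})]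

lemma core (k : ℕ) (hk : nseq k ∈ Sgood) (hbig : 4 * Real.pi^2 * 2^20 ≤ nseq k)
    (lam : ℝ) (hlam : lam ∈ Set.Ioo (nseq k) (nseq (k + 1)))
    (ζ : Fin 2 → ℤ) (hζ : ζ ≠ 0) (hn : znorm ζ ≤ lam ^ ((1:ℝ)/100))
    (ξ : Fin 2 → ℤ)
    (hξ : |4 * Real.pi ^ 2 * (∑ i, (ξ i : ℝ) ^ 2) - nseq k| ≤ (nseq k) ^ ((17:ℝ)/100)) :
    (nseq k) ^ ((17:ℝ)/100) ≤ |4 * Real.pi ^ 2 * (∑ i, ((ξ i + ζ i : ℤ) : ℝ) ^ 2) - lam| := by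
  rw [mem_Sgood] at hk
  push Not at hk
  obtain ⟨hb1, hb2⟩ := hk
  set m := Nat.nth IsSum2Sq k with hm
  set κ : ℝ := 4 * Real.pi^2 with hκ
  have hκ1 : 36 ≤ κ := by rw [hκ]; nlinarith [Real.pi_gt_three]
  have hκ2 : κ ≤ 40 := by rw [hκ]; nlinarith [Real.pi_lt_d2, Real.pi_gt_three]
  have hnk : nseq k = κ * m := rfl
  rw [hnk] at hbig hξ ⊢
  have hm20 : (2:ℝ)^20 ≤ m := le_of_mul_le_mul_left hbig (by linarith)
  have hm1 : (1:ℝ) ≤ m := by linarith [show (1:ℝ) ≤ 2^20 by norm_num]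
  have hm0 : (0:ℝ) < m := by linarith
  set D : ℝ := (m:ℝ)^((17:ℝ)/100) with hD
  have hD0 : 0 < D := by positivity
  have hDm : D ≤ m := by
    calc D ≤ (m:ℝ)^(1:ℝ) := Real.rpow_le_rpow_of_exponent_le hm1 (by norm_num)
      _ = m := Real.rpow_one _
  -- comparison of powers
  have hpow : (κ * m)^((17:ℝ)/100) ≤ κ * D := by
    rw [Real.mul_rpow (by linarith) hm0.le]
    gcongr
    calc κ^((17:ℝ)/100) ≤ κ^(1:ℝ) := Real.rpow_le_rpow_of_exponent_le (by linarith) (by norm_num)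
      _ = κ := Real.rpow_one _
  -- the gap
  have hgap : lam ≤ κ * (m + D) := by
    unfold Bad1 at hb1
    push Not at hb1
    obtain ⟨m', h1, h2, h3⟩ := hb1
    have h4 : Nat.nth IsSum2Sq (k+1) ≤ m' := by
      by_contra hcon
      push Not at hcon
      have := Nat.le_nth_of_lt_nth_succ hcon h3
      omega
    have h5 : ((Nat.nth IsSum2Sq (k+1) : ℕ):ℝ) ≤ m' := by exact_mod_cast h4
    have h6 : lam < κ * (Nat.nth IsSum2Sq (k+1) : ℕ) := hlam.2
    refine h6.le.trans ?_
    gcongr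
    exact h5.trans h2
  have hlo : κ * m < lam := hlam.1
  have hlam0 : 0 ≤ lam := by
    have : 0 ≤ κ * m := by positivity
    linarith
  -- size of ζ
  have hE : lam ^ ((1:ℝ)/100) ≤ 2 * (m:ℝ)^((1:ℝ)/100) := by
    have h1 : lam ≤ 2^(100:ℝ) * m := by
      have : (80:ℝ) ≤ 2^(100:ℝ) := by norm_num
      nlinarith
    calc lam ^ ((1:ℝ)/100) ≤ (2^(100:ℝ) * m)^((1:ℝ)/100) := by gcongr
      _ = _ := by
        rw [Real.mul_rpow (by positivity) hm0.le, ← Real.rpow_mul (by norm_num)]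
        norm_num
  have hzn := hn.trans hE
  unfold znorm at hzn
  rw [Fin.sum_univ_two] at hzn
  have hsqz : (ζ 0:ℝ)^2 + (ζ 1:ℝ)^2 ≤ (2 * (m:ℝ)^((1:ℝ)/100))^2 := by
    rw [← Real.sqrt_le_left (by positivity)]; exact hzn
  have hz0 : |(ζ 0:ℝ)| ≤ 2 * (m:ℝ)^((1:ℝ)/100) :=
    abs_le_of_sq_le_sq (by nlinarith [sq_nonneg (ζ 1:ℝ)]) (by positivity)
  have hz1 : |(ζ 1:ℝ)| ≤ 2 * (m:ℝ)^((1:ℝ)/100) :=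
    abs_le_of_sq_le_sq (by nlinarith [sq_nonneg (ζ 0:ℝ)]) (by positivity)
  have hzD : (ζ 0:ℝ)^2 + (ζ 1:ℝ)^2 ≤ D := by
    refine hsqz.trans ?_
    have h1 : (4:ℝ) ≤ (m:ℝ)^((15:ℝ)/100) := by
      calc (4:ℝ) = 2^(2:ℝ) := by norm_num
        _ ≤ 2^((20:ℝ)*((15:ℝ)/100)) := Real.rpow_le_rpow_of_exponent_le (by norm_num) (by norm_num)
        _ = ((2:ℝ)^20)^((15:ℝ)/100) := by
          rw [Real.rpow_mul (by norm_num)]; norm_num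
        _ ≤ _ := by gcongr
    have h2 : D = (m:ℝ)^((15:ℝ)/100) * ((m:ℝ)^((1:ℝ)/100))^2 := by
      rw [hD, ← Real.rpow_natCast, ← Real.rpow_mul hm0.le, ← Real.rpow_add hm0]; norm_num
    rw [h2, mul_pow]
    nlinarith [sq_nonneg ((m:ℝ)^((1:ℝ)/100))]
  rw [Fin.sum_univ_two] at hξ
  have hx : |((ξ 0:ℝ)^2 + (ξ 1:ℝ)^2) - m| ≤ D := by
    have h1 := hξ.trans hpow
    rw [← mul_sub, abs_mul, abs_of_pos (by linarith)] at h1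
    exact le_of_mul_le_mul_left h1 (by linarith)
  have hip : 2 * D < |(ξ 0:ℝ) * ζ 0 + (ξ 1:ℝ) * ζ 1| := by
    by_contra hcon
    push Not at hcon
    apply hb2
    refine ⟨ξ 0, ξ 1, ζ 0, ζ 1, ?_, hz0, hz1, hx, hcon⟩
    by_contra h
    push Not at h
    apply hζ
    ext i; fin_cases i
    · exact h.1
    · exact h.2
  refine hpow.trans ?_
  rw [Fin.sum_univ_two]
  push_cast
  obtain ⟨μ, hμ⟩ : ∃ μ, lam = κ * μ := ⟨lam / κ, by field_simp⟩
  rw [hμ] at hlo hgap ⊢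
  have hμ1 : (m:ℝ) < μ := lt_of_mul_lt_mul_left hlo (by linarith)
  have hμ2 : μ ≤ m + D := le_of_mul_le_mul_left hgap (by linarith)
  rw [← mul_sub, abs_mul, abs_of_pos (show 0 < κ by linarith)]
  gcongr
  obtain ⟨hx1, hx2⟩ := abs_le.mp hx
  have hz2 : 0 ≤ (ζ 0:ℝ)^2 + (ζ 1:ℝ)^2 := by positivity
  rcases lt_abs.mp hip with h | h
  · refine le_trans ?_ (le_abs_self _)
    nlinarith
  · refine le_trans ?_ (neg_le_abs _)
    nlinarith

/-- On a density-one subsequence of `S`, for `λ ∈ (n_k, n_{k+1})` the shifted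
lattice points `ξ + ζ`, with `ξ ∈ A(n_k, n_k^δ)` and `0 ≠ |ζ| ≤ λ^ε`, stay at distance
`≳ n_k^δ` from `λ`; equivalently `|c_λ(ξ+ζ)| ≲ n_k^{−δ}`. -/
theorem shifted_annulus_separation :
    ∃ ε δ : ℝ, 0 < ε ∧ δ ∈ Set.Ioo (θH / 2) (1/2 - θH) ∧
    ∃ S' : Set ℝ, S' ⊆ Sset ∧ HasDensityOne S' ∧
    ∃ C lam0 : ℝ, 0 < C ∧ 0 < lam0 ∧
      ∀ k : ℕ, nseq k ∈ S' → lam0 ≤ nseq k →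
      ∀ lam : ℝ, lam ∈ Set.Ioo (nseq k) (nseq (k + 1)) →
      ∀ ζ : Fin 2 → ℤ, ζ ≠ 0 → znorm ζ ≤ lam ^ ε →
      ∀ ξ : Fin 2 → ℤ, |4 * Real.pi ^ 2 * (∑ i, (ξ i : ℝ) ^ 2) - nseq k| ≤ (nseq k) ^ δ →
        C⁻¹ * (nseq k) ^ δ ≤ |4 * Real.pi ^ 2 * (∑ i, ((ξ i + ζ i : ℤ) : ℝ) ^ 2) - lam| ∧
        |(4 * Real.pi ^ 2 * (∑ i, ((ξ i + ζ i : ℤ) : ℝ) ^ 2) - lam)⁻¹| ≤ C * (nseq k) ^ (-δ) := by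
  refine ⟨1/100, 17/100, by norm_num, ?_, Sgood, ?_, density, 1, 4 * Real.pi^2 * 2^20,
    by norm_num, by positivity, ?_⟩
  · unfold θH; constructor <;> norm_num
  · rintro x ⟨k, rfl, -⟩; exact ⟨k, rfl⟩
  · intro k hk hbig lam hlam ζ hζ hn ξ hξ
    have h := core k hk hbig lam hlam ζ hζ hn ξ hξ
    have hpos : 0 < nseq k := lt_of_lt_of_le (by positivity) hbig
    refine ⟨by rw [inv_one, one_mul]; exact h, ?_⟩
    rw [one_mul, Real.rpow_neg hpos.le, abs_inv]
    gcongr
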